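/- arXiv:2204.00935 — 2 statements merged into one kernel-verified Lean document; each statement's English description precedes it below -/
import Mathlib

section
/- For every d > 0 and every y_T, z_T ∈ ℝ, the explicit 3×3 matrix R_D^T whose columns are c₁ = (d, −y_T, −z_T)/√(d²+y_T²+z_T²), c₂ = (y_T, d, 0)/√(d²+y_T²), and c₃ = (d z_T, −y_T z_T, d²+y_T²)/(√(d²+y_T²+z_T²)·√(d²+y_T²)) is a rotation matrix, i.e., (R_D^T)^⊤ R_D^T = I₃ and det R_D^T = 1. -/
open Matrix

/-- The rotation matrix `R_D^T` from the desired frame to the target frame, with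
characteristic distance `d` and cross-track errors `yT, zT`; its columns are
`c₁ = (d, −yT, −zT)/√(d²+yT²+zT²)`, `c₂ = (yT, d, 0)/√(d²+yT²)`, and
`c₃ = (d·zT, −yT·zT, d²+yT²)/(√(d²+yT²+zT²)·√(d²+yT²))`. -/
noncomputable def RDT (d yT zT : ℝ) : Matrix (Fin 3) (Fin 3) ℝ :=
  Matrix.of fun i j =>
    ![(fun k => ![d, -yT, -zT] k / Real.sqrt (d ^ 2 + yT ^ 2 + zT ^ 2)),
      (fun k => ![yT, d, 0] k / Real.sqrt (d ^ 2 + yT ^ 2)),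
      (fun k => ![d * zT, -yT * zT, d ^ 2 + yT ^ 2] k /
        (Real.sqrt (d ^ 2 + yT ^ 2 + zT ^ 2) * Real.sqrt (d ^ 2 + yT ^ 2)))] j i

/-! The third column of `R_D^T` is the cross product of the first two, which are the normalizations
of the orthogonal vectors `(d, -yT, -zT)` and `(yT, d, 0)`. An orthonormal pair completed by its
cross product is a positively oriented orthonormal frame. -/

section CrossFrame

variable {R : Type*} [CommRing R]

/-- The `3 × 3` matrix with columns `u`, `v`, `u ⨯₃ v`: the frame obtained by completing a pair of
vectors with their cross product. -/
def crossFrame (u v : Fin 3 → R) : Matrix (Fin 3) (Fin 3) R :=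
  (Matrix.of ![u, v, u ⨯₃ v])ᵀ

theorem transpose_crossFrame_mul_crossFrame (u v : Fin 3 → R) :
    (crossFrame u v)ᵀ * crossFrame u v =
      !![u ⬝ᵥ u, u ⬝ᵥ v, 0;
         u ⬝ᵥ v, v ⬝ᵥ v, 0;
         0, 0, u ⨯₃ v ⬝ᵥ u ⨯₃ v] := by
  ext i j
  change ![u, v, u ⨯₃ v] i ⬝ᵥ ![u, v, u ⨯₃ v] j = _
  fin_cases i <;> fin_cases j <;>
    simp [dotProduct_comm v u, dotProduct_comm (u ⨯₃ v) u, dotProduct_comm (u ⨯₃ v) v]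

theorem det_crossFrame (u v : Fin 3 → R) : (crossFrame u v).det = u ⨯₃ v ⬝ᵥ u ⨯₃ v :=
  calc (crossFrame u v).det = Matrix.det ![u, v, u ⨯₃ v] := det_transpose _
    _ = u ⬝ᵥ v ⨯₃ (u ⨯₃ v) := (triple_product_eq_det _ _ _).symm
    _ = u ⨯₃ v ⬝ᵥ u ⨯₃ v := (triple_product_permutation _ _ _).symm

theorem crossFrame_mem_specialOrthogonalGroup {u v : Fin 3 → R} (hu : u ⬝ᵥ u = 1)
    (hv : v ⬝ᵥ v = 1) (huv : u ⬝ᵥ v = 0) :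
    crossFrame u v ∈ specialOrthogonalGroup (Fin 3) R := by
  have hcross : u ⨯₃ v ⬝ᵥ u ⨯₃ v = 1 := by
    rw [cross_dot_cross, hu, hv, huv, zero_mul, sub_zero, one_mul]
  refine mem_specialOrthogonalGroup_iff.2 ⟨(mem_orthogonalGroup_iff' _ _).2 ?_, ?_⟩
  · rw [transpose_crossFrame_mul_crossFrame, hu, hv, huv, hcross, one_fin_three]
  · rw [det_crossFrame, hcross]

end CrossFrame

section DotNormalize

variable {ι : Type*} [Fintype ι]

/-- The vector `u` divided by its Euclidean length. The length is written through the dot product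
because the norm on `ι → ℝ` is the supremum norm. The zero vector is sent to itself. -/
noncomputable def dotNormalize (u : ι → ℝ) : ι → ℝ :=
  (√(u ⬝ᵥ u))⁻¹ • u

theorem dotNormalize_dotProduct_self {u : ι → ℝ} (hu : u ≠ 0) :
    dotNormalize u ⬝ᵥ dotNormalize u = 1 := by
  have hnonneg : 0 ≤ u ⬝ᵥ u := Finset.sum_nonneg fun i _ => mul_self_nonneg (u i)
  have hne : u ⬝ᵥ u ≠ 0 := dotProduct_self_eq_zero.not.2 hu
  rw [dotNormalize, smul_dotProduct, dotProduct_smul, smul_smul, smul_eq_mul, ← mul_inv,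
    Real.mul_self_sqrt hnonneg, inv_mul_cancel₀ hne]

theorem dotNormalize_dotProduct_eq_zero {u v : ι → ℝ} (huv : u ⬝ᵥ v = 0) :
    dotNormalize u ⬝ᵥ dotNormalize v = 0 := by
  rw [dotNormalize, dotNormalize, smul_dotProduct, dotProduct_smul, huv, smul_zero, smul_zero]

end DotNormalize

theorem crossFrame_dotNormalize_mem_specialOrthogonalGroup {u v : Fin 3 → ℝ} (hu : u ≠ 0)
    (hv : v ≠ 0) (huv : u ⬝ᵥ v = 0) :
    crossFrame (dotNormalize u) (dotNormalize v) ∈ specialOrthogonalGroup (Fin 3) ℝ :=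
  crossFrame_mem_specialOrthogonalGroup (dotNormalize_dotProduct_self hu)
    (dotNormalize_dotProduct_self hv) (dotNormalize_dotProduct_eq_zero huv)

theorem RDT_eq_crossFrame (d yT zT : ℝ) :
    RDT d yT zT = crossFrame (dotNormalize ![d, -yT, -zT]) (dotNormalize ![yT, d, 0]) := by
  have hu : ![d, -yT, -zT] ⬝ᵥ ![d, -yT, -zT] = d ^ 2 + yT ^ 2 + zT ^ 2 := by
    rw [vec3_dotProduct']; ring
  have hv : ![yT, d, 0] ⬝ᵥ ![yT, d, 0] = d ^ 2 + yT ^ 2 := by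
    rw [vec3_dotProduct']; ring
  have hcross : ![d, -yT, -zT] ⨯₃ ![yT, d, 0] = ![d * zT, -yT * zT, d ^ 2 + yT ^ 2] := by
    simp only [cross_apply, cons_val]
    exact vec3_eq (by ring) (by ring) (by ring)
  rw [crossFrame, dotNormalize, dotNormalize, hu, hv, LinearMap.map_smul₂, map_smul, hcross,
    smul_smul, ← mul_inv]
  ext i j
  fin_cases j <;> exact div_eq_inv_mul _ _

/-- for every `d > 0` and every `yT, zT ∈ ℝ`, the matrix `R_D^T` is a rotation
matrix: `(R_D^T)ᵀ R_D^T = I₃` and `det R_D^T = 1`. -/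
theorem RDT_mem_SO3 (d yT zT : ℝ) (hd : 0 < d) :
    (RDT d yT zT)ᵀ * RDT d yT zT = 1 ∧ (RDT d yT zT).det = 1 := by
  have hu : ![d, -yT, -zT] ≠ 0 := fun h => hd.ne' (congrFun h 0)
  have hv : ![yT, d, 0] ≠ 0 := fun h => hd.ne' (congrFun h 1)
  have huv : ![d, -yT, -zT] ⬝ᵥ ![yT, d, 0] = 0 := by
    rw [vec3_dotProduct']; ring
  have hmem := crossFrame_dotNormalize_mem_specialOrthogonalGroup hu hv huv
  rw [← RDT_eq_crossFrame, mem_specialOrthogonalGroup_iff, mem_orthogonalGroup_iff'] at hmem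
  exact hmem
end

section
/- Let R̃ : ℝ → ℝ^{3×3} be differentiable with R̃(t) ∈ SO(3) for all t, and suppose R̃′(t) = R̃(t)·(ω_W(t))^∧ − (ω_D(t))^∧·R̃(t), where ω_W(t) = [p(t), q(t), r(t)]^⊤ and ω_D : ℝ → ℝ³ are continuous. Then the attitude error Ψ(R̃(t)) ≜ (1/2)(1 − R̃₁₁(t)) satisfies d/dt Ψ(R̃(t)) = e_{R̃}(t)^⊤ ( [q(t), r(t)]^⊤ − Π_R · R̃(t)^⊤ · ω_D(t) ), where e_{R̃}(t) ≜ (1/2)[R̃₁₃(t), −R̃₁₂(t)]^⊤. -/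
open Matrix

attribute [local instance] Matrix.normedAddCommGroup Matrix.normedSpace

/-- The hat map `(ξ)^∧` sending a vector in ℝ³ to a skew-symmetric 3×3 matrix. -/
def hatMap (ξ : Fin 3 → ℝ) : Matrix (Fin 3) (Fin 3) ℝ :=
  !![0, -ξ 2, ξ 1; ξ 2, 0, -ξ 0; -ξ 1, ξ 0, 0]

/-- The 2×3 projection matrix `Π_R = [[0,1,0],[0,0,1]]`. -/
def PiR : Matrix (Fin 2) (Fin 3) ℝ := !![0, 1, 0; 0, 0, 1]

/-- The attitude error function `Ψ(R) = (1/2)(1 − R₁₁)`. -/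
noncomputable def Psi (R : Matrix (Fin 3) (Fin 3) ℝ) : ℝ := (1 / 2 : ℝ) * (1 - R 0 0)

/-- The attitude error vector `e_R = (1/2)[R₁₃, −R₁₂]ᵀ`. -/
noncomputable def eR (R : Matrix (Fin 3) (Fin 3) ℝ) : Fin 2 → ℝ :=
  ![R 0 2 / 2, -(R 0 1) / 2]

/-! For a rotation `R`, `Rᵀ (R v)^∧ R = v^∧`, because `u · (v × w)` is a determinant and so is
invariant under rotations. Hence `(ω_D)^∧ R̃ = R̃ (R̃ᵀ ω_D)^∧`, and the error kinematics become
`R̃′ = R̃ ξ^∧` with the relative angular velocity `ξ = ω_W − R̃ᵀ ω_D`. The first component of `ξ` is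
a rotation about the first axis of `W` and does not affect `R̃₁₁`; the other two enter
`-(R̃ ξ^∧)₁₁ / 2` with the coefficients `e_R̃`. -/

lemma hatMap_sub (v w : Fin 3 → ℝ) : hatMap (v - w) = hatMap v - hatMap w := by
  ext i j
  fin_cases i <;> fin_cases j <;> simp [hatMap, neg_add_eq_sub]

lemma hatMap_mulVec (v w : Fin 3 → ℝ) : hatMap v *ᵥ w = v ⨯₃ w := by
  ext i
  fin_cases i <;>
    simp [hatMap, cross_apply, mulVec, dotProduct, Fin.sum_univ_three, sub_eq_add_neg,
      add_comm]

lemma dotProduct_hatMap_mulVec (u v w : Fin 3 → ℝ) :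
    u ⬝ᵥ (hatMap v *ᵥ w) = (of ![u, v, w]).det := by
  rw [hatMap_mulVec]
  exact triple_product_eq_det u v w

lemma det_of_mulVec {n S : Type*} [Fintype n] [DecidableEq n] [CommRing S] (M : Matrix n n S)
    (v : n → n → S) : (of fun i => M *ᵥ v i).det = M.det * (of v).det := by
  have rows_eq_mul : (of fun i => M *ᵥ v i) = of v * Mᵀ := by
    ext i j
    exact dotProduct_comm _ _
  rw [rows_eq_mul, det_mul, det_transpose, mul_comm]

lemma transpose_mul_hatMap_mulVec_mul (M : Matrix (Fin 3) (Fin 3) ℝ) (v : Fin 3 → ℝ) :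
    Mᵀ * hatMap (M *ᵥ v) * M = M.det • hatMap v := by
  have rows_eq (u w : Fin 3 → ℝ) :
      ![M *ᵥ u, M *ᵥ v, M *ᵥ w] = fun i => M *ᵥ ![u, v, w] i := by
    ext i : 1
    fin_cases i <;> rfl
  have bilin_eq (u w : Fin 3 → ℝ) :
      u ⬝ᵥ ((Mᵀ * hatMap (M *ᵥ v) * M) *ᵥ w) = u ⬝ᵥ ((M.det • hatMap v) *ᵥ w) :=
    calc u ⬝ᵥ ((Mᵀ * hatMap (M *ᵥ v) * M) *ᵥ w)
      _ = (M *ᵥ u) ⬝ᵥ (hatMap (M *ᵥ v) *ᵥ (M *ᵥ w)) := by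
        rw [← mulVec_mulVec, ← mulVec_mulVec, dotProduct_mulVec, vecMul_transpose]
      _ = M.det * (of ![u, v, w]).det := by
        rw [dotProduct_hatMap_mulVec, rows_eq, det_of_mulVec]
      _ = u ⬝ᵥ ((M.det • hatMap v) *ᵥ w) := by
        rw [smul_mulVec, dotProduct_smul, dotProduct_hatMap_mulVec, smul_eq_mul]
  exact ext_of_mulVec_single fun i => dotProduct_eq _ _ fun u => by
    rw [dotProduct_comm, bilin_eq, dotProduct_comm]

lemma hatMap_mul_eq_mul_hatMap_transpose_mulVec {R : Matrix (Fin 3) (Fin 3) ℝ}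
    (hR : Rᵀ * R = 1) (hdet : R.det = 1) (v : Fin 3 → ℝ) :
    hatMap v * R = R * hatMap (Rᵀ *ᵥ v) := by
  have hR' : R * Rᵀ = 1 := mul_eq_one_comm.mp hR
  calc hatMap v * R
    _ = R * (Rᵀ * hatMap (R *ᵥ (Rᵀ *ᵥ v)) * R) := by
      rw [mulVec_mulVec, hR', one_mulVec, ← mul_assoc, ← mul_assoc, hR', one_mul]
    _ = R * hatMap (Rᵀ *ᵥ v) := by
      rw [transpose_mul_hatMap_mulVec_mul, hdet, one_smul]

lemma PiR_mulVec (v : Fin 3 → ℝ) : PiR *ᵥ v = ![v 1, v 2] := by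
  ext i
  fin_cases i <;> simp [PiR, mulVec, dotProduct, Fin.sum_univ_three]

lemma eR_dotProduct_PiR_mulVec (A : Matrix (Fin 3) (Fin 3) ℝ) (v : Fin 3 → ℝ) :
    eR A ⬝ᵥ (PiR *ᵥ v) = -(1 / 2) * (A * hatMap v) 0 0 := by
  have entry : (A * hatMap v) 0 0 = A 0 1 * v 2 - A 0 2 * v 1 := by
    simp [hatMap, mul_apply, Fin.sum_univ_three, sub_eq_add_neg]
  have pairing : eR A ⬝ᵥ (PiR *ᵥ v) = A 0 2 / 2 * v 1 + -A 0 1 / 2 * v 2 := by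
    rw [PiR_mulVec]
    exact vec2_dotProduct _ _
  rw [entry, pairing]
  ring

lemma hasDerivAt_Psi {R : ℝ → Matrix (Fin 3) (Fin 3) ℝ} {R' : Matrix (Fin 3) (Fin 3) ℝ} {t : ℝ}
    (hR : HasDerivAt R R' t) : HasDerivAt (fun s => Psi (R s)) (-(1 / 2) * R' 0 0) t := by
  have entry : HasDerivAt (fun s => R s 0 0) (R' 0 0) t :=
    hasDerivAt_pi.mp (hasDerivAt_pi.mp hR 0) 0
  exact ((entry.const_sub 1).const_mul (1 / 2)).congr_deriv (by ring)

theorem attitude_error_dynamics_general {R : ℝ → Matrix (Fin 3) (Fin 3) ℝ} {ωW ωD : Fin 3 → ℝ}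
    {t : ℝ} (hR : (R t)ᵀ * R t = 1) (hdet : (R t).det = 1)
    (hderiv : HasDerivAt R (R t * hatMap ωW - hatMap ωD * R t) t) :
    HasDerivAt (fun s => Psi (R s))
      (eR (R t) ⬝ᵥ (![ωW 1, ωW 2] - PiR *ᵥ ((R t)ᵀ *ᵥ ωD))) t := by
  have hderiv' : HasDerivAt R (R t * hatMap (ωW - (R t)ᵀ *ᵥ ωD)) t := by
    rwa [hatMap_sub, mul_sub, ← hatMap_mul_eq_mul_hatMap_transpose_mulVec hR hdet]
  rw [← PiR_mulVec, ← mulVec_sub, eR_dotProduct_PiR_mulVec]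
  exact hasDerivAt_Psi hderiv'

/-- attitude error dynamics. If `R̃(t) ∈ SO(3)` satisfies
`R̃′ = R̃(ω_W)^∧ − (ω_D)^∧ R̃` with `ω_W = [p, q, r]ᵀ`, then
`d/dt Ψ(R̃(t)) = e_{R̃}ᵀ([q, r]ᵀ − Π_R R̃ᵀ ω_D)`. -/
theorem attitude_error_dynamics
    (Rt : ℝ → Matrix (Fin 3) (Fin 3) ℝ)
    (pp q r : ℝ → ℝ) (ωD : ℝ → Fin 3 → ℝ)
    (hSO : ∀ t : ℝ, (Rt t)ᵀ * Rt t = 1 ∧ (Rt t).det = 1)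
    (hderiv : ∀ t : ℝ,
      HasDerivAt Rt (Rt t * hatMap ![pp t, q t, r t] - hatMap (ωD t) * Rt t) t)
    (hcontW : Continuous fun t => (![pp t, q t, r t] : Fin 3 → ℝ))
    (hcontD : Continuous ωD) :
    ∀ t : ℝ,
      HasDerivAt (fun s => Psi (Rt s))
        (eR (Rt t) ⬝ᵥ (![q t, r t] - PiR.mulVec ((Rt t)ᵀ.mulVec (ωD t)))) t :=
  fun t => attitude_error_dynamics_general (hSO t).1 (hSO t).2 (hderiv t)
end
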